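/- Let X be a power homogeneous compactum which is the union of countably many countably tight dense subspaces. Then L(X_δ) ≤ 𝔠, where X_δ is the G_δ-modification of X. -/

import Mathlib

open Cardinal Set TopologicalSpace

universe u

/-- The tightness `t(X)`: the least infinite cardinal `κ` such that whenever
`x ∈ closure A` there is `B ⊆ A` with `#B ≤ κ` and `x ∈ closure B`. -/
noncomputable def tightness (X : Type u) [TopologicalSpace X] : Cardinal.{u} :=
  sInf {κ : Cardinal.{u} | ℵ₀ ≤ κ ∧ ∀ (A : Set X) (x : X), x ∈ closure A →
    ∃ B ⊆ A, #B ≤ κ ∧ x ∈ closure B}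

/-- The `κ`-closure of a set `A`. -/
noncomputable def clk {X : Type u} [TopologicalSpace X] (κ : Cardinal.{u}) (A : Set X) : Set X :=
  ⋃ (B : Set X) (_ : B ⊆ A ∧ #B ≤ κ), closure B

/-- A cover `𝒞` witnessing that `wt X ≤ κ`. -/
noncomputable def IsWtWitness {X : Type u} [TopologicalSpace X] (κ : Cardinal.{u}) (𝒞 : Set (Set X)) : Prop :=
  ⋃₀ 𝒞 = Set.univ ∧ #𝒞 ≤ 2 ^ κ ∧ ∀ C ∈ 𝒞, tightness ↥C ≤ κ ∧ clk (2 ^ κ) C = Set.univ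

/-- The weak tightness `wt(X)`. -/
noncomputable def wt (X : Type u) [TopologicalSpace X] : Cardinal.{u} :=
  sInf {κ : Cardinal.{u} | ℵ₀ ≤ κ ∧ ∃ 𝒞 : Set (Set X), IsWtWitness κ 𝒞}

/-- The Lindelöf number `L(X)`. -/
noncomputable def LindelofNumber (X : Type u) [TopologicalSpace X] : Cardinal.{u} :=
  sInf {κ : Cardinal.{u} | ℵ₀ ≤ κ ∧ ∀ 𝒰 : Set (Set X), (∀ U ∈ 𝒰, IsOpen U) →
    ⋃₀ 𝒰 = Set.univ → ∃ 𝒱 ⊆ 𝒰, #𝒱 ≤ κ ∧ ⋃₀ 𝒱 = Set.univ}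

/-- The pseudocharacter `ψ(X)`. -/
noncomputable def psi (X : Type u) [TopologicalSpace X] : Cardinal.{u} :=
  sInf {κ : Cardinal.{u} | ℵ₀ ≤ κ ∧ ∀ x : X, ∃ 𝒰 : Set (Set X),
    #𝒰 ≤ κ ∧ (∀ U ∈ 𝒰, IsOpen U ∧ x ∈ U) ∧ ⋂₀ 𝒰 = {x}}

/-- The closed pseudocharacter `ψ_c(X)`. -/
noncomputable def psic (X : Type u) [TopologicalSpace X] : Cardinal.{u} :=
  sInf {κ : Cardinal.{u} | ℵ₀ ≤ κ ∧ ∀ x : X, ∃ 𝒰 : Set (Set X),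
    #𝒰 ≤ κ ∧ (∀ U ∈ 𝒰, IsOpen U ∧ x ∈ U) ∧ (⋂ U ∈ 𝒰, closure U) = {x}}

/-- `A` is `𝒞`-saturated: `A ∩ C` is dense in `A` for every `C ∈ 𝒞`. -/
noncomputable def Saturated {X : Type u} [TopologicalSpace X] (𝒞 : Set (Set X)) (A : Set X) : Prop :=
  ∀ C ∈ 𝒞, A ⊆ closure (A ∩ C)

/-- The π-character `πχ(x, X)` of a point: least cardinality of a local π-base at `x`. -/
noncomputable def piCharPt {X : Type u} [TopologicalSpace X] (x : X) : Cardinal.{u} :=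
  sInf {κ : Cardinal.{u} | ∃ ℬ : Set (Set X), #ℬ ≤ κ ∧
    (∀ B ∈ ℬ, IsOpen B ∧ B.Nonempty) ∧ ∀ U : Set X, IsOpen U → x ∈ U → ∃ B ∈ ℬ, B ⊆ U}

/-- The π-character `πχ(X)`. -/
noncomputable def piChar (X : Type u) [TopologicalSpace X] : Cardinal.{u} :=
  ⨆ x : X, piCharPt x

/-- The character `χ(x, X)` of a point: least cardinality of a local base at `x`. -/
noncomputable def charPt {X : Type u} [TopologicalSpace X] (x : X) : Cardinal.{u} :=
  sInf {κ : Cardinal.{u} | ∃ ℬ : Set (Set X), #ℬ ≤ κ ∧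
    (∀ B ∈ ℬ, IsOpen B ∧ x ∈ B) ∧ ∀ U : Set X, IsOpen U → x ∈ U → ∃ B ∈ ℬ, B ⊆ U}

/-- The character `χ(X)`. -/
noncomputable def character (X : Type u) [TopologicalSpace X] : Cardinal.{u} :=
  ⨆ x : X, charPt x

/-- The density `d(X)`: least cardinality of a dense subset. -/
noncomputable def density (X : Type u) [TopologicalSpace X] : Cardinal.{u} :=
  sInf {κ : Cardinal.{u} | ∃ D : Set X, Dense D ∧ #D ≤ κ}

/-- A space is homogeneous if its homeomorphism group acts transitively. -/
noncomputable def Homogeneous (X : Type u) [TopologicalSpace X] : Prop :=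
  ∀ x y : X, ∃ h : X ≃ₜ X, h x = y

/-- A space is power homogeneous if some (nonempty) power of it is homogeneous. -/
noncomputable def PowerHomogeneous (X : Type u) [TopologicalSpace X] : Prop :=
  ∃ I : Type u, Nonempty I ∧ Homogeneous (I → X)

/-- A `G^c_κ`-set: `G = ⋂𝒰 = ⋂_{U ∈ 𝒰} closure U` for a family `𝒰` of `≤ κ` open sets. -/
noncomputable def GcSet {X : Type u} [TopologicalSpace X] (κ : Cardinal.{u}) (G : Set X) : Prop :=
  ∃ 𝒰 : Set (Set X), #𝒰 ≤ κ ∧ (∀ U ∈ 𝒰, IsOpen U) ∧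
    G = ⋂₀ 𝒰 ∧ G = ⋂ U ∈ 𝒰, closure U

/-- A subset is subseparable if it is contained in the closure of a countable set. -/
noncomputable def Subseparable {X : Type u} [TopologicalSpace X] (A : Set X) : Prop :=
  ∃ c : Set X, c.Countable ∧ A ⊆ closure c

/-!
The tightness of the `C n` controls uncountable constructions in `X` as follows: `X` carries no
uncountable dyadic system, and no uncountable free sequence whose terms lie in the closures of
countable subsets of every `C n`. If every point of `X` had uncountable π-character, functions
independent of the previous ones could be chosen `ω₁` times, and the pressing down lemma would make
uncountably many of them into a dyadic system; so some point has countable π-character, and this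
applies to all closed subspaces of `X`. If some open set contained no nonempty subseparable `G_δ`
set, such points of closed `G_δ` subspaces would form a free sequence of length `ω₁`. A point of a
subseparable `G_δ` set has pseudocharacter at most `𝔠`, so by compactness it is in the closure of a
subset of size at most `𝔠` of every dense set. In a homogeneous power of `X`, the coordinates of a
constant point of countable π-character are handled countably many at a time, which carries this
property of the points of the subseparable `G_δ` sets over to all points of `X`.

Given a `G_δ` neighbourhood `W x` of each point `x`, close off to get a set `A` of size at most `𝔠`
such that `A ∩ C n` is dense in `A` for all `n`, the closures of the countable subsets of `A` are
covered by the sets `W x` with `x ∈ A`, and every finite family of the open sets defining these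
`W x` that does not cover `X` misses a point of `A`. By tightness the sets `W x` with `x ∈ A` cover
the closure of `A`, and by compactness they cover `X`.
-/

section Transfinite

theorem exists_forall_rel_Iio {Ω D : Type*} [Preorder Ω] [WellFoundedLT Ω] [Nonempty D]
    (Q : (a : Ω) → (Iio a → D) → D → Prop)
    (h : ∀ (a : Ω) (f : Ω → D), (∀ b < a, Q b (fun c => f c) (f b)) → ∃ d, Q a (fun c => f c) d) :
    ∃ f : Ω → D, ∀ a, Q a (fun c => f c) (f a) := by
  classical
  let G : (a : Ω) → ((b : Ω) → b < a → D) → D := fun a f =>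
    if hd : ∃ d, Q a (fun c => f c c.2) d then hd.choose else Classical.arbitrary D
  let f : Ω → D := (wellFounded_lt (α := Ω)).fix G
  refine ⟨f, fun a => ?_⟩
  induction a using WellFoundedLT.induction with
  | _ a ih =>
    have hd := h a f ih
    have hfa : f a = hd.choose := (WellFounded.fix_eq _ G a).trans (dif_pos hd)
    exact hfa ▸ hd.choose_spec

variable {Ω : Type*} [LinearOrder Ω] [Uncountable Ω]

theorem exists_forall_lt_of_countable (hΩ : ∀ a : Ω, (Iio a).Countable) {s : Set Ω}
    (hs : s.Countable) : ∃ a, ∀ b ∈ s, b < a := by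
  by_contra! h
  have hIic : (⋃ b ∈ s, Iic b).Countable :=
    hs.biUnion fun b _ => Iio_insert (a := b) ▸ (hΩ b).insert b
  refine not_countable_univ (hIic.mono fun a _ => ?_)
  obtain ⟨b, hb, hab⟩ := h a
  exact mem_biUnion hb hab

theorem exists_not_countable_preimage_of_regressive [WellFoundedLT Ω]
    (hΩ : ∀ a : Ω, (Iio a).Countable) {α : Type*} {f : Ω → α} {S : Ω → Set α}
    (hS : ∀ a, (S a).Countable) (hf : ∀ a, ¬ IsMin a → ∃ b < a, f a ∈ S b) :
    ∃ c, ¬ (f ⁻¹' {c}).Countable := by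
  -- If all fibres are countable, iterate a bound for the points whose value lies in some `S b`
  -- with `b < d`. The supremum of the iterates has no room for its own value.
  by_contra! hfib
  have hbound : ∀ d : Ω, ∃ e, d < e ∧ ∀ a, ∀ b < d, f a ∈ S b → a < e := by
    intro d
    have hd : (⋃ b ∈ Iio d, ⋃ c ∈ S b, f ⁻¹' {c}).Countable :=
      (hΩ d).biUnion fun b _ => (hS b).biUnion fun c _ => hfib c
    obtain ⟨e, he⟩ := exists_forall_lt_of_countable hΩ (hd.insert d)
    exact ⟨e, he d (mem_insert _ _), fun a b hb ha =>
      he a (mem_insert_of_mem _ (mem_biUnion hb (mem_biUnion ha rfl)))⟩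
  choose g hg hbound using hbound
  let δ : ℕ → Ω := fun n => g^[n] (Classical.arbitrary Ω)
  have hδ : ∀ n, δ (n + 1) = g (δ n) := fun n => Function.iterate_succ_apply' _ _ _
  obtain ⟨u, hu⟩ := exists_forall_lt_of_countable hΩ (countable_range δ)
  obtain ⟨s, hs, hmin⟩ := (wellFounded_lt (α := Ω)).has_min (upperBounds (range δ))
    ⟨u, fun b hb => (hu b hb).le⟩
  have hlub : IsLUB (range δ) s := ⟨hs, fun b hb => not_lt.1 (hmin b hb)⟩
  have hδs : ∀ n, δ n < s := fun n =>
    (hg (δ n)).trans_le (hδ n ▸ hs (mem_range_self (n + 1)))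
  obtain ⟨b, hbs, hb⟩ := hf s (not_isMin_of_lt (hδs 0))
  obtain ⟨_, ⟨n, rfl⟩, hbn⟩ := (lt_isLUB_iff hlub).1 hbs
  exact lt_asymm (hδs (n + 1)) (hδ n ▸ hbound (δ n) s b hbn hb)

end Transfinite

open Topology

theorem countable_Iio_toType_ord_aleph_one (a : (ℵ_ 1).ord.ToType) : (Iio a).Countable := by
  have h : #(Iio a) < ℵ_ 1 := by simpa using mk_Iio_lt a (by simp)
  rwa [← le_aleph0_iff_set_countable, ← Order.lt_succ_iff, succ_aleph0]

theorem uncountable_toType_ord_aleph_one : Uncountable (ℵ_ 1).ord.ToType := by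
  rw [← aleph0_lt_mk_iff]
  simp

section Tightness

variable {X : Type u} [TopologicalSpace X]

theorem tightness_spec (X : Type u) [TopologicalSpace X] : ℵ₀ ≤ tightness X ∧
    ∀ (A : Set X) (x : X), x ∈ closure A → ∃ B ⊆ A, #B ≤ tightness X ∧ x ∈ closure B :=
  csInf_mem (s := {κ : Cardinal.{u} | ℵ₀ ≤ κ ∧ ∀ (A : Set X) (x : X), x ∈ closure A →
    ∃ B ⊆ A, #B ≤ κ ∧ x ∈ closure B}) ⟨max ℵ₀ #X, le_max_left _ _, fun A _ hx =>
      ⟨A, Subset.rfl, (mk_set_le A).trans (le_max_right _ _), hx⟩⟩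

theorem tightness_le_of_isEmbedding {Y : Type u} [TopologicalSpace Y] {f : X → Y}
    (hf : IsEmbedding f) : tightness X ≤ tightness Y := by
  refine csInf_le' ⟨(tightness_spec Y).1, fun A x hx => ?_⟩
  have hfx : f x ∈ closure (f '' A) := image_closure_subset_closure_image hf.continuous ⟨x, hx, rfl⟩
  obtain ⟨B, hBA, hB, hxB⟩ := (tightness_spec Y).2 _ _ hfx
  have hfB : f '' (f ⁻¹' B) = B := image_preimage_eq_of_subset (hBA.trans (image_subset_range f A))
  refine ⟨f ⁻¹' B, (preimage_mono hBA).trans (preimage_image_eq A hf.injective).subset,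
    (mk_preimage_of_injective f B hf.injective).trans hB, ?_⟩
  rwa [hf.isInducing.closure_eq_preimage_closure_image, mem_preimage, hfB]

theorem exists_countable_mem_closure_of_tightness_le {C : Set X} (hC : tightness C ≤ ℵ₀)
    {A : Set X} (hA : A ⊆ C) {x : X} (hx : x ∈ C) (hxA : x ∈ closure A) :
    ∃ B ⊆ A, B.Countable ∧ x ∈ closure B := by
  have hxA' : (⟨x, hx⟩ : C) ∈ closure (Subtype.val ⁻¹' A) := by
    rwa [closure_subtype, Subtype.image_preimage_coe, inter_eq_right.2 hA]
  obtain ⟨B, hBA, hBc, hxB⟩ := (tightness_spec C).2 _ _ hxA'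
  exact ⟨Subtype.val '' B, image_subset_iff.2 hBA,
    (le_aleph0_iff_set_countable.1 (hBc.trans hC)).image _, closure_subtype.1 hxB⟩

theorem piCharPt_le_aleph0_iff {x : X} : piCharPt x ≤ ℵ₀ ↔ ∃ ℬ : Set (Set X), ℬ.Countable ∧
    (∀ B ∈ ℬ, IsOpen B ∧ B.Nonempty) ∧ ∀ U, IsOpen U → x ∈ U → ∃ B ∈ ℬ, B ⊆ U := by
  refine ⟨fun h => ?_, fun ⟨ℬ, hc, hℬ⟩ => csInf_le' ⟨ℬ, hc.le_aleph0, hℬ⟩⟩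
  have hne : {κ : Cardinal.{u} | ∃ ℬ : Set (Set X), #ℬ ≤ κ ∧
      (∀ B ∈ ℬ, IsOpen B ∧ B.Nonempty) ∧ ∀ U, IsOpen U → x ∈ U → ∃ B ∈ ℬ, B ⊆ U}.Nonempty :=
    ⟨_, {U | IsOpen U ∧ U.Nonempty}, le_rfl, fun _ hB => hB,
      fun U hU hx => ⟨U, ⟨hU, x, hx⟩, Subset.rfl⟩⟩
  obtain ⟨ℬ, hc, hℬ⟩ := csInf_mem hne
  exact ⟨ℬ, le_aleph0_iff_set_countable.1 (hc.trans h), hℬ⟩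

end Tightness

section Dyadic

variable {X : Type u} {I : Type*}

/-- The fibre over `ε` of the partial map from `X` to the Cantor cube `I → Bool` whose `i`-th
coordinate is `t` on `F i t`. -/
def dyadicFiber (F : I → Bool → Set X) (ε : I → Bool) : Set X :=
  ⋂ i, F i (ε i)

variable [TopologicalSpace X]

/-- A dyadic system: pairs of disjoint closed sets such that any choice of one set from each pair
has a common point. A compactum carries one indexed by `I` iff a closed subset of it maps
continuously onto the Cantor cube `I → Bool`. -/
structure IsDyadicSystem (F : I → Bool → Set X) : Prop where
  isClosed : ∀ i t, IsClosed (F i t)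
  disjoint : ∀ i, Disjoint (F i false) (F i true)
  nonempty : ∀ ε, (dyadicFiber F ε).Nonempty

theorem IsDyadicSystem.isClosed_dyadicFiber {F : I → Bool → Set X} (hF : IsDyadicSystem F)
    (ε : I → Bool) : IsClosed (dyadicFiber F ε) :=
  isClosed_iInter fun i => hF.isClosed i (ε i)

/-- A condition in the construction of a fibre of a dyadic system: a partial function `value` on
`domain` (its values off `domain` are irrelevant) and a closed set meeting all fibres over the
total functions that extend it. -/
structure DyadicCondition (F : I → Bool → Set X) where
  carrier : Set X
  domain : Set I
  value : I → Bool
  isClosed : IsClosed carrier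
  nonempty : ∀ ε, EqOn ε value domain → (carrier ∩ dyadicFiber F ε).Nonempty

namespace DyadicCondition

variable {F : I → Bool → Set X}

/-- Larger conditions are stronger, as in the usual reversal of a forcing order. -/
instance : Preorder (DyadicCondition F) where
  le s t := t.carrier ⊆ s.carrier ∧ s.domain ⊆ t.domain ∧ EqOn t.value s.value s.domain
  le_refl s := ⟨Subset.rfl, Subset.rfl, fun _ _ => rfl⟩
  le_trans _ _ _ hst htr := ⟨htr.1.trans hst.1, hst.2.1.trans htr.2.1,
    fun _ hi => (htr.2.2 (hst.2.1 hi)).trans (hst.2.2 hi)⟩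

/-- The condition `s` already decides that the fibres it produces miss `C`. -/
def Avoids (s : DyadicCondition F) (C : Set X) : Prop :=
  ∀ ε, EqOn ε s.value s.domain → Disjoint (s.carrier ∩ dyadicFiber F ε) C

/-- The points of `s.carrier ∩ C` lying over extensions of `s` that take the value `true` at only
finitely many new coordinates in `R` (a `σ`-product in the Cantor cube). -/
def finiteSupport (s : DyadicCondition F) (C : Set X) (R : Set I) : Set X :=
  {x ∈ s.carrier ∩ C | ∃ ε, EqOn ε s.value s.domain ∧ x ∈ dyadicFiber F ε ∧
    {i ∈ R \ s.domain | ε i = true}.Finite}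

theorem closure_finiteSupport_inter_dyadicFiber_nonempty [CompactSpace X] (hF : IsDyadicSystem F)
    (s : DyadicCondition F) {C : Set X} {R : Set I}
    (hC : ∀ (T : Finset I) (p : I → Bool), EqOn p s.value s.domain →
      ∃ ε, EqOn ε p (s.domain ∪ R ∪ T) ∧ (s.carrier ∩ dyadicFiber F ε ∩ C).Nonempty)
    {ε : I → Bool} (hε : EqOn ε s.value s.domain) :
    (closure (s.finiteSupport C R) ∩ dyadicFiber F ε).Nonempty := by
  classical
  refine isClosed_closure.isCompact.inter_iInter_nonempty _ (fun i => hF.isClosed i (ε i))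
    fun T => ?_
  obtain ⟨ε', hε', x, ⟨hxK, hxε'⟩, hxC⟩ := hC T ((s.domain ∪ T).piecewise ε fun _ => false)
    fun i hi => ((s.domain ∪ T).piecewise_eqOn _ _ (Or.inl hi)).trans (hε hi)
  have hεT : EqOn ε' ε (s.domain ∪ T) := fun i hi =>
    (hε' (union_subset_union_left _ subset_union_left hi)).trans (piecewise_eq_of_mem _ _ _ hi)
  refine ⟨x, subset_closure ⟨⟨hxK, hxC⟩, ε', fun i hi => (hεT (Or.inl hi)).trans (hε hi), hxε',
    T.finite_toSet.subset ?_⟩, mem_iInter₂.2 fun i hi => hεT (Or.inr hi) ▸ mem_iInter.1 hxε' i⟩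
  rintro i ⟨⟨hiR, hiD⟩, hi⟩
  by_contra hiT
  rw [hε' (Or.inl (Or.inr hiR)),
    (s.domain ∪ T).piecewise_eq_of_notMem _ _ (not_or.2 ⟨hiD, hiT⟩)] at hi
  exact Bool.false_ne_true hi

theorem disjoint_closure_finiteSupport (hF : IsDyadicSystem F) (s : DyadicCondition F) {C : Set X}
    (hC : tightness C ≤ ℵ₀) {R : Set I} (hR : ¬ (R \ s.domain).Countable) {ε : I → Bool}
    (hε : ∀ i ∈ R \ s.domain, ε i = true) :
    Disjoint (closure (s.finiteSupport C R) ∩ dyadicFiber F ε) C := by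
  refine disjoint_left.2 fun q ⟨hqA, hqε⟩ hqC => ?_
  obtain ⟨B, hBA, hBc, hqB⟩ :=
    exists_countable_mem_closure_of_tightness_le hC (fun x hx => hx.1.2) hqC hqA
  choose! η _ hη hηfin using fun x (hx : x ∈ B) => (hBA hx).2
  have hcount : (⋃ x ∈ B, {i ∈ R \ s.domain | η x i = true}).Countable :=
    hBc.biUnion fun x hx => (hηfin x hx).countable
  obtain ⟨i, hiR, hi⟩ : ∃ i ∈ R \ s.domain, ∀ x ∈ B, η x i = false := by
    obtain ⟨i, hiR, hi⟩ := not_subset.1 fun h => hR (hcount.mono h)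
    refine ⟨i, hiR, fun x hx => Bool.eq_false_iff.2 fun h => hi (mem_biUnion hx ⟨hiR, h⟩)⟩
  have hqfalse : q ∈ F i false :=
    closure_minimal (fun x hx => hi x hx ▸ mem_iInter.1 (hη x hx) i) (hF.isClosed i false) hqB
  exact disjoint_left.1 (hF.disjoint i) hqfalse (hε i hiR ▸ mem_iInter.1 hqε i)

theorem exists_le_avoids [CompactSpace X] (hF : IsDyadicSystem F) (s : DyadicCondition F)
    {C : Set X} (hC : tightness C ≤ ℵ₀) {R : Set I} (hR : ¬ (R \ s.domain).Countable) :
    ∃ t, s ≤ t ∧ (t.domain \ (s.domain ∪ R)).Countable ∧ t.Avoids C := by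
  classical
  by_cases hcase : ∃ (T : Finset I) (p : I → Bool), EqOn p s.value s.domain ∧
      ∀ ε, EqOn ε p (s.domain ∪ R ∪ T) → Disjoint (s.carrier ∩ dyadicFiber F ε) C
  · obtain ⟨T, p, hp, havoid⟩ := hcase
    exact ⟨⟨s.carrier, s.domain ∪ R ∪ T, p, s.isClosed, fun ε hε => s.nonempty ε fun i hi =>
        (hε (Or.inl (Or.inl hi))).trans (hp hi)⟩,
      ⟨Subset.rfl, fun i hi => Or.inl (Or.inl hi), hp⟩,
      T.countable_toSet.mono (by simp only [union_sdiff_left, sdiff_subset]), havoid⟩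
  · push Not at hcase
    simp only [not_disjoint_iff_nonempty_inter] at hcase
    let p : I → Bool := s.domain.piecewise s.value fun _ => true
    have hp : EqOn p s.value s.domain := s.domain.piecewise_eqOn _ _
    have hp' : EqOn p (fun _ => true) s.domainᶜ := s.domain.piecewise_eqOn_compl _ _
    have hps : ∀ ε, EqOn ε p (s.domain ∪ R) → EqOn ε s.value s.domain := fun ε hε i hi =>
      (hε (Or.inl hi)).trans (hp hi)
    refine ⟨⟨closure (s.finiteSupport C R), s.domain ∪ R, p, isClosed_closure, fun ε hε =>
        s.closure_finiteSupport_inter_dyadicFiber_nonempty hF hcase (hps ε hε)⟩,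
      ⟨closure_minimal (fun x hx => hx.1.1) s.isClosed, subset_union_left, hp⟩,
      by simp, fun ε hε => ?_⟩
    exact s.disjoint_closure_finiteSupport hF hC hR fun i hi =>
      (hε (Or.inr hi.1)).trans (hp' hi.2)

theorem exists_eqOn_and_mem_of_monotone [CompactSpace X] (hF : IsDyadicSystem F)
    {s : ℕ → DyadicCondition F} (hs : Monotone s) :
    ∃ ε, (∀ n, EqOn ε (s n).value (s n).domain) ∧
      ∃ x, ∀ n, x ∈ (s n).carrier ∩ dyadicFiber F ε := by
  classical
  let ε : I → Bool := fun i =>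
    if h : ∃ n, i ∈ (s n).domain then (s (Nat.find h)).value i else true
  have hε : ∀ n, EqOn ε (s n).value (s n).domain := by
    intro n i hi
    have h : ∃ n, i ∈ (s n).domain := ⟨n, hi⟩
    exact (dif_pos h).trans ((hs (Nat.find_min' h hi)).2.2 (Nat.find_spec h)).symm
  have hclosed : ∀ n, IsClosed ((s n).carrier ∩ dyadicFiber F ε) := fun n =>
    (s n).isClosed.inter (hF.isClosed_dyadicFiber ε)
  obtain ⟨x, hx⟩ := IsCompact.nonempty_iInter_of_sequence_nonempty_isCompact_isClosed
    (fun n => (s n).carrier ∩ dyadicFiber F ε)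
    (fun n => inter_subset_inter_left _ (hs n.le_succ).1)
    (fun n => (s n).nonempty ε (hε n)) (hclosed 0).isCompact hclosed
  exact ⟨ε, hε, x, mem_iInter.1 hx⟩

end DyadicCondition

theorem exists_pairwise_disjoint_not_countable (I : Type*) [Uncountable I] :
    ∃ R : ℕ → Set I, Pairwise (Function.onFun Disjoint R) ∧ ∀ n, ¬ (R n).Countable := by
  obtain ⟨e⟩ : Nonempty (I ≃ ℕ × I) := by
    rw [← Cardinal.eq, mk_prod]
    simp [aleph0_mul_eq (aleph0_le_mk I)]
  refine ⟨fun n => {i | (e i).1 = n}, fun m n hmn => disjoint_left.2 fun i him hin =>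
    hmn (him.symm.trans hin), fun n hn => ?_⟩
  refine not_countable_univ ((hn.preimage (f := fun i => e.symm (n, i)) ?_).mono fun i _ => ?_)
  · exact e.symm.injective.comp (Prod.mk_right_injective n)
  · simp

theorem IsDyadicSystem.countable_of_iUnion_eq_univ [CompactSpace X] {F : I → Bool → Set X}
    (hF : IsDyadicSystem F) {C : ℕ → Set X} (hcov : ⋃ n, C n = Set.univ)
    (hC : ∀ n, tightness (C n) ≤ ℵ₀) : Countable I := by
  by_contra hI
  rw [not_countable_iff] at hI
  obtain ⟨R, hRdisj, hR⟩ := exists_pairwise_disjoint_not_countable I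
  have hRsdiff : ∀ n (s : DyadicCondition F), (R n ∩ s.domain).Countable →
      ¬ (R n \ s.domain).Countable := fun n s h h' => hR n (inter_union_sdiff (R n) _ ▸ h.union h')
  choose! next hle hdiff havoid using fun n s h =>
    DyadicCondition.exists_le_avoids hF s (hC n) (hRsdiff n s h)
  let s₀ : DyadicCondition F := ⟨Set.univ, ∅, fun _ => true, isClosed_univ, fun ε _ => by
    simpa only [univ_inter] using hF.nonempty ε⟩
  let s : ℕ → DyadicCondition F := fun n => Nat.rec s₀ next n
  have hs : ∀ n m, n ≤ m → (R m ∩ (s n).domain).Countable := by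
    intro n
    induction n with
    | zero => exact fun m _ => by simp [s, s₀]
    | succ n ih =>
      intro m hnm
      refine ((ih m (Nat.le_of_succ_le hnm)).union (hdiff n (s n) (ih n le_rfl))).mono ?_
      rintro i ⟨him, hi⟩
      by_cases his : i ∈ (s n).domain
      · exact Or.inl ⟨him, his⟩
      · have hin : i ∉ R n := disjoint_left.1 (hRdisj (Nat.ne_of_gt hnm)) him
        exact Or.inr ⟨hi, not_or.2 ⟨his, hin⟩⟩
  obtain ⟨ε, hε, x, hx⟩ := DyadicCondition.exists_eqOn_and_mem_of_monotone hF
    (monotone_nat_of_le_succ fun n => hle n (s n) (hs n n le_rfl))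
  obtain ⟨n, hn⟩ := mem_iUnion.1 (hcov.ge (mem_univ x))
  exact disjoint_left.1 (havoid n (s n) (hs n n le_rfl) ε (hε (n + 1))) (hx (n + 1)) hn

end Dyadic

section PiCharacter

variable {X : Type u}

/-- Every fibre of `Φ` through a point of `U` contains points of `U` where `f` is `0` and where `f`
is `1`, so that `f` is a coordinate independent of `Φ` over `U`. -/
def Splits {Y : Type*} (Φ : X → Y) (U : Set X) (f : X → ℝ) : Prop :=
  ∀ x ∈ U, ∀ t : Bool, ∃ y ∈ U, Φ y = Φ x ∧ f y = if t then 1 else 0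

theorem Splits.mono {Y : Type*} {Φ : X → Y} {U V : Set X} {f : X → ℝ} (hf : Splits Φ U f)
    (hVU : V ⊆ U) (hV : ∀ x ∈ V, ∀ y, Φ y = Φ x → y ∈ V) : Splits Φ V f := fun x hx t => by
  obtain ⟨y, -, hyx, hyt⟩ := hf x (hVU hx) t
  exact ⟨y, hV x hx y hyx, hyx, hyt⟩

variable [TopologicalSpace X]

theorem exists_isOpen_image_compl_eq_univ [CompactSpace X] {Y : Type*} [TopologicalSpace Y]
    [T2Space Y] [SecondCountableTopology Y] {Φ : X → Y} (hΦ : Continuous Φ)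
    (hΦs : Function.Surjective Φ) {x : X} (hx : ℵ₀ < piCharPt x) :
    ∃ W, IsOpen W ∧ x ∈ W ∧ Φ '' Wᶜ = Set.univ := by
  -- Otherwise the preimages of a countable base of `Y` form a local π-base at `x`.
  by_contra! h
  refine hx.not_ge (piCharPt_le_aleph0_iff.2 ⟨preimage Φ '' (countableBasis Y),
    (countable_countableBasis Y).image _, ?_, fun W hW hxW => ?_⟩)
  · rintro _ ⟨V, hV, rfl⟩
    exact ⟨(isOpen_of_mem_countableBasis hV).preimage hΦ,
      (nonempty_of_mem_countableBasis hV).preimage hΦs⟩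
  · obtain ⟨z, hz⟩ := (ne_univ_iff_exists_notMem _).1 (h W hW hxW)
    have hclosed : IsClosed (Φ '' Wᶜ) := (hW.isClosed_compl.isCompact.image hΦ).isClosed
    obtain ⟨V, hV, -, hVW⟩ :=
      (isBasis_countableBasis Y).exists_subset_of_mem_open (show z ∈ (Φ '' Wᶜ)ᶜ from hz)
        hclosed.isOpen_compl
    refine ⟨_, mem_image_of_mem _ hV, fun y hy => ?_⟩
    by_contra hyW
    exact hVW hy (mem_image_of_mem Φ hyW)

theorem exists_isOpen_Iic_of_isOpen_Iio {Ω E : Type*} [LinearOrder Ω]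
    [TopologicalSpace E] {a : Ω} (ha : ¬ IsMin a) {O : Set (Iio a → E)} (hO : IsOpen O) {z : Ω → E}
    (hz : (Iio a).domRestrict z ∈ O) : ∃ b < a, ∃ V : Set (Iic b → E), IsOpen V ∧
      (Iic b).domRestrict z ∈ V ∧
      ∀ w : Ω → E, (Iic b).domRestrict w ∈ V → (Iio a).domRestrict w ∈ O := by
  obtain ⟨I, u, hu, huO⟩ := isOpen_pi_iff.1 hO _ hz
  have : Nonempty (Iio a) := (not_isMin_iff.1 ha).elim fun b hb => ⟨⟨b, hb⟩⟩
  obtain ⟨b, hb⟩ := I.exists_le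
  let r : (Iic b.1 → E) → I → E := fun w i => w ⟨i, hb i i.2⟩
  have hr : Continuous r := continuous_pi fun i => continuous_apply _
  have hV : IsOpen (univ.pi fun i : I => u i) :=
    isOpen_set_pi finite_univ fun i _ => (hu i i.2).1
  exact ⟨b, b.2, _, hV.preimage hr, fun i _ => (hu i i.2).2,
    fun w hw => huO fun i hi => hw ⟨i, hi⟩ (mem_univ _)⟩

theorem isDyadicSystem_of_splits [CompactSpace X] {ι : Type*} [LinearOrder ι] {g : ι → C(X, ℝ)}
    {U : Set X} (hU : U.Nonempty) (hg : ∀ a, Splits (fun x (b : Iio a) => g b x) U (g a)) :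
    IsDyadicSystem fun a t => g a ⁻¹' {if t then 1 else 0} := by
  have hclosed : ∀ a (t : Bool), IsClosed (g a ⁻¹' {if t then 1 else 0}) := fun a t =>
    isClosed_singleton.preimage (g a).continuous
  have hfinite : ∀ (ε : ι → Bool) (s : Finset ι),
      ∃ x ∈ U, ∀ a ∈ s, g a x = if ε a then 1 else 0 := by
    intro ε s
    induction s using Finset.induction_on_max with
    | empty => exact hU.imp fun x hx => ⟨hx, by simp⟩
    | insert a s hs ih =>
      obtain ⟨x, hx, hxs⟩ := ih
      obtain ⟨y, hy, hyx, hya⟩ := hg a x hx (ε a)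
      refine ⟨y, hy, (Finset.forall_mem_insert _ _ _).2 ⟨hya, fun b hb => ?_⟩⟩
      exact (congrFun hyx ⟨b, hs b hb⟩).trans (hxs b hb)
  refine ⟨hclosed, fun a => Disjoint.preimage _ (by simp), fun ε =>
    CompactSpace.iInter_nonempty (fun a => hclosed a (ε a)) fun s => ?_⟩
  obtain ⟨x, -, hx⟩ := hfinite ε s
  exact ⟨x, mem_iInter₂.2 hx⟩

variable [CompactSpace X] [T2Space X] [Nonempty X]

theorem exists_splits_of_surjective (hX : ∀ x : X, ℵ₀ < piCharPt x) {Y : Type*}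
    [TopologicalSpace Y] [T2Space Y] [SecondCountableTopology Y] {Φ : X → Y}
    (hΦ : Continuous Φ) (hΦs : Function.Surjective Φ) :
    ∃ O, IsOpen O ∧ O.Nonempty ∧ ∃ f : C(X, ℝ), Splits Φ (Φ ⁻¹' O) f := by
  choose W hWo hxW hW using fun x => exists_isOpen_image_compl_eq_univ hΦ hΦs (hX x)
  choose K hKx hKc hKW using fun x =>
    exists_mem_nhds_isClosed_subset ((hWo x).mem_nhds (hxW x))
  obtain ⟨t, ht⟩ := CompactSpace.elim_nhds_subcover K hKx
  have : CompactSpace Y := hΦs.compactSpace hΦ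
  have : Nonempty Y := .map Φ ‹_›
  obtain ⟨⟨x, _⟩, hx⟩ := nonempty_interior_of_iUnion_of_closed (f := fun x : t => Φ '' K x)
    (fun x => ((hKc x).isCompact.image hΦ).isClosed) (by
      rw [← image_iUnion, iUnion_subtype, ht, top_eq_univ, image_univ, hΦs.range_eq])
  obtain ⟨f, hf0, hf1, -⟩ := exists_continuous_zero_one_of_isClosed (hKc x)
    (hWo x).isClosed_compl (disjoint_compl_right_iff_subset.2 (hKW x))
  refine ⟨interior (Φ '' K x), isOpen_interior, hx, f, fun z hz t => ?_⟩
  suffices ∃ y, Φ y = Φ z ∧ f y = if t then 1 else 0 by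
    obtain ⟨y, hyz, hy⟩ := this
    exact ⟨y, by rwa [mem_preimage, hyz], hyz, hy⟩
  cases t
  · obtain ⟨y, hy, hyz⟩ := interior_subset hz
    exact ⟨y, hyz, hf0 hy⟩
  · obtain ⟨y, hy, hyz⟩ := (hW x).ge (mem_univ (Φ z))
    exact ⟨y, hyz, hf1 hy⟩

theorem exists_splits_of_countable (hX : ∀ x : X, ℵ₀ < piCharPt x) {ι : Type*} [Countable ι]
    (g : ι → C(X, ℝ)) : ∃ f : C(X, ℝ), ∃ O : Set (ι → ℝ), IsOpen O ∧
      ((fun x i => g i x) ⁻¹' O).Nonempty ∧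
        Splits (fun x i => g i x) ((fun x i => g i x) ⁻¹' O) f := by
  set Φ : X → ι → ℝ := fun x i => g i x
  have hΦ : Continuous Φ := continuous_pi fun i => (g i).continuous
  obtain ⟨_, hV, hne, f, hf⟩ :=
    exists_splits_of_surjective hX hΦ.rangeFactorization rangeFactorization_surjective
  obtain ⟨O, hO, rfl⟩ := isOpen_induced_iff.1 hV
  refine ⟨f, O, hO, hne.preimage rangeFactorization_surjective, fun x hx t => ?_⟩
  obtain ⟨y, hy, hyx, hyt⟩ := hf x hx t
  exact ⟨y, hy, congrArg Subtype.val hyx, hyt⟩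

theorem exists_splits_sequence (hX : ∀ x : X, ℵ₀ < piCharPt x) {Ω : Type*} [LinearOrder Ω]
    [WellFoundedLT Ω] (hΩ : ∀ a : Ω, (Iio a).Countable) :
    ∃ g : Ω → C(X, ℝ), ∀ a, ∃ O : Set (Iio a → ℝ), IsOpen O ∧
      ((fun x (b : Iio a) => g b x) ⁻¹' O).Nonempty ∧
        Splits (fun x (b : Iio a) => g b x) ((fun x (b : Iio a) => g b x) ⁻¹' O) (g a) :=
  exists_forall_rel_Iio (fun a (p : Iio a → C(X, ℝ)) f => ∃ O : Set (Iio a → ℝ), IsOpen O ∧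
      ((fun x b => p b x) ⁻¹' O).Nonempty ∧ Splits (fun x b => p b x) ((fun x b => p b x) ⁻¹' O) f)
    fun a _ _ =>
      have : Countable (Iio a) := (hΩ a).to_subtype
      exists_splits_of_countable hX _

theorem exists_splits_not_countable (hX : ∀ x : X, ℵ₀ < piCharPt x) {Ω : Type*} [LinearOrder Ω]
    [WellFoundedLT Ω] [Uncountable Ω] (hΩ : ∀ a : Ω, (Iio a).Countable) :
    ∃ g : Ω → C(X, ℝ), ∃ U : Set X, ∃ S : Set Ω, ¬ S.Countable ∧ U.Nonempty ∧
      ∀ a ∈ S, Splits (fun x (b : Iio a) => g b x) U (g a) := by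
  obtain ⟨g, hg⟩ := exists_splits_sequence hX hΩ
  have : ∀ b : Ω, Countable (Iic b) := fun b => (Iio_insert (a := b) ▸ (hΩ b).insert b).to_subtype
  let Φ : X → Ω → ℝ := fun x b => g b x
  let 𝒮 : Ω → Set (Set X) := fun b =>
    (fun V => Φ ⁻¹' ((Iic b).domRestrict ⁻¹' V)) '' countableBasis (Iic b → ℝ)
  have hU : ∀ a, ∃ U : Set X, (U.Nonempty ∧ Splits (fun x (b : Iio a) => g b x) U (g a)) ∧
      (¬ IsMin a → ∃ b < a, U ∈ 𝒮 b) := by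
    intro a
    obtain ⟨O, hO, ⟨x, hx⟩, hsplit⟩ := hg a
    by_cases ha : IsMin a
    · exact ⟨_, ⟨⟨x, hx⟩, hsplit⟩, absurd ha⟩
    obtain ⟨b, hba, V, hV, hxV, hVO⟩ :=
      exists_isOpen_Iic_of_isOpen_Iio ha hO (z := Φ x) hx
    obtain ⟨B, hB, hxB, hBV⟩ :=
      (isBasis_countableBasis _).exists_subset_of_mem_open hxV hV
    refine ⟨_, ⟨⟨x, hxB⟩, hsplit.mono (fun y hy => hVO (Φ y) (hBV hy)) fun y hy z hzy => ?_⟩,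
      fun _ => ⟨b, hba, mem_image_of_mem _ hB⟩⟩
    have hzy' : (Iic b).domRestrict (Φ z) = (Iic b).domRestrict (Φ y) :=
      funext fun c => congrFun hzy ⟨c, c.2.trans_lt hba⟩
    exact (congrArg (· ∈ B) hzy').mpr hy
  choose U hU hUS using hU
  obtain ⟨U₀, hU₀⟩ := exists_not_countable_preimage_of_regressive hΩ
    (fun b => (countable_countableBasis _).image _) hUS
  obtain ⟨a, ha⟩ : (U ⁻¹' {U₀}).Nonempty := nonempty_iff_ne_empty.2 fun h =>
    hU₀ (h ▸ countable_empty)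
  exact ⟨g, U₀, U ⁻¹' {U₀}, hU₀, ha ▸ (hU a).1, fun b hb => hb ▸ (hU b).2⟩

theorem exists_piCharPt_le_aleph0 {C : ℕ → Set X} (hcov : ⋃ n, C n = Set.univ)
    (hC : ∀ n, tightness (C n) ≤ ℵ₀) : ∃ x : X, piCharPt x ≤ ℵ₀ := by
  by_contra! hX
  have := uncountable_toType_ord_aleph_one.{0}
  obtain ⟨g, U, S, hS, hU, hg⟩ :=
    exists_splits_not_countable hX countable_Iio_toType_ord_aleph_one.{0}
  have hdyadic := isDyadicSystem_of_splits (g := fun a : S => g a) hU fun a x hx t => by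
    obtain ⟨y, hy, hyx, hyt⟩ := hg a a.2 x hx t
    exact ⟨y, hy, funext fun b => congrFun hyx ⟨b, b.2⟩, hyt⟩
  exact hS (countable_coe_iff.1 (hdyadic.countable_of_iUnion_eq_univ hcov hC))

end PiCharacter

section ClosedGδ

variable {X : Type u} [TopologicalSpace X]

theorem exists_isClosed_isGδ_subset_of_subset [NormalSpace X] {K U : Set X} (hK : IsClosed K)
    (hU : IsOpen U) (hKU : K ⊆ U) : ∃ H, IsClosed H ∧ IsGδ H ∧ K ⊆ H ∧ H ⊆ U := by
  obtain ⟨f, hf0, hf1, -⟩ := exists_continuous_zero_one_of_isClosed hK hU.isClosed_compl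
    (disjoint_compl_right_iff_subset.2 hKU)
  refine ⟨f ⁻¹' {0}, isClosed_singleton.preimage f.continuous,
    isClosed_singleton.isGδ.preimage f.continuous, hf0, fun y hy => ?_⟩
  by_contra hyU
  exact zero_ne_one ((show f y = 0 from hy).symm.trans (hf1 hyU))

variable [CompactSpace X] [T2Space X]

theorem exists_countable_subset_closure_inter_nonempty {L : Set X} (hL : IsClosed L) (hLδ : IsGδ L)
    (hne : L.Nonempty) {D : Set X} (hD : Dense D) :
    ∃ c ⊆ D, c.Countable ∧ (closure c ∩ L).Nonempty := by
  obtain ⟨f, hfL, -⟩ := exists_continuous_one_zero_of_isCompact_of_isGδ hL.isCompact hLδ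
    isClosed_empty (disjoint_empty L)
  obtain ⟨x, hx⟩ := hne
  have hfx : f x = 1 := by rwa [hfL] at hx
  obtain ⟨v, hvD, hv⟩ := mem_closure_iff_seq_limit.1
    (mem_closure_image f.continuous.continuousAt (hD x))
  choose d hdD hdv using hvD
  have hclosed : IsClosed (f '' closure (range d)) :=
    (isClosed_closure.isCompact.image f.continuous).isClosed
  obtain ⟨q, hq, hqx⟩ := hclosed.mem_of_tendsto hv
    (.of_forall fun n => ⟨d n, subset_closure (mem_range_self n), hdv n⟩)
  exact ⟨range d, range_subset_iff.2 hdD, countable_range d, q, hq, hfL ▸ hqx.trans hfx⟩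

theorem exists_countable_mem_closure_of_piCharPt_le {H : Set X} (hH : IsClosed H) (hHδ : IsGδ H)
    {x : H} (hx : piCharPt x ≤ ℵ₀) {D : Set X} (hD : Dense D) :
    ∃ c ⊆ D, c.Countable ∧ (x : X) ∈ closure c := by
  obtain ⟨ℬ, hℬc, hℬ, hℬx⟩ := piCharPt_le_aleph0_iff.1 hx
  have hc : ∀ B ∈ ℬ, ∃ c ⊆ D, c.Countable ∧ ∃ y ∈ B, (y : X) ∈ closure c := by
    intro B hB
    obtain ⟨hBo, z, hz⟩ := hℬ B hB
    obtain ⟨O, hO, rfl⟩ := isOpen_induced_iff.1 hBo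
    obtain ⟨G, hG, hGδ, hzG, hGO⟩ := exists_isClosed_isGδ_subset_of_subset
      (isClosed_singleton (x := (z : X))) hO (singleton_subset_iff.2 hz)
    obtain ⟨c, hcD, hc, y, hyc, hyH, hyG⟩ := exists_countable_subset_closure_inter_nonempty
      (hH.inter hG) (hHδ.inter hGδ) ⟨z, z.2, singleton_subset_iff.1 hzG⟩ hD
    exact ⟨c, hcD, hc, ⟨y, hyH⟩, hGO hyG, hyc⟩
  choose! c hcD hcc y hyB hyc using hc
  refine ⟨⋃ B ∈ ℬ, c B, iUnion₂_subset hcD, hℬc.biUnion hcc, mem_closure_iff.2 fun U hU hxU => ?_⟩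
  obtain ⟨B, hB, hBU⟩ := hℬx _ (hU.preimage continuous_subtype_val) hxU
  obtain ⟨d, hdU, hd⟩ := mem_closure_iff.1 (hyc B hB) U hU (hBU (hyB B hB))
  exact ⟨d, hdU, mem_biUnion hB hd⟩

end ClosedGδ

section Subseparable

variable {X : Type u} [TopologicalSpace X]

/-- One term of a free sequence of points, each of them in the closures of countable subsets of all
`C n`, together with the closed `G_δ` set in which the later terms are to be found. -/
structure FreeSequenceStage (C : ℕ → Set X) where
  carrier : Set X
  point : X
  approx : ℕ → Set X
  isClosed : IsClosed carrier
  isGδ : IsGδ carrier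
  point_mem : point ∈ carrier
  approx_subset : ∀ n, approx n ⊆ C n
  countable_approx : ∀ n, (approx n).Countable
  point_mem_closure : ∀ n, point ∈ closure (approx n)

theorem inter_iInter_nonempty_of_antitone {K : Set X} (hK : IsCompact K) (hne : K.Nonempty)
    {ι : Type*} [LinearOrder ι] {H : ι → Set X} (hH : Antitone H) (hHK : ∀ i, H i ⊆ K)
    (hHc : ∀ i, IsClosed (H i)) (hHne : ∀ i, (H i).Nonempty) : (K ∩ ⋂ i, H i).Nonempty := by
  refine hK.inter_iInter_nonempty H hHc fun s => ?_
  rcases isEmpty_or_nonempty ι with _ | _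
  · simpa [Subsingleton.elim s ∅] using hne
  · obtain ⟨m, hm⟩ := s.exists_le
    exact (hHne m).mono (subset_inter (hHK m) (subset_iInter₂ fun i hi => hH (hm i hi)))

variable {C : ℕ → Set X}

theorem false_of_freeSequence [CompactSpace X] (hcov : ⋃ n, C n = Set.univ)
    (hC : ∀ n, tightness (C n) ≤ ℵ₀) {Ω : Type*} [LinearOrder Ω] [Uncountable Ω]
    (hΩ : ∀ a : Ω, (Iio a).Countable) {s : Ω → FreeSequenceStage C}
    (hs : Antitone fun a => (s a).carrier)
    (hfree : ∀ a, Disjoint (s a).carrier (closure (⋃ b : Iio a, ⋃ n, (s b).approx n))) : False := by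
  obtain ⟨q, hq⟩ := exists_clusterPt_of_compactSpace
    (Filter.map (fun a => (s a).point) Filter.atTop)
  have hmem : ∀ {F : Set X} (a : Ω), IsClosed F → (∀ b, a ≤ b → (s b).point ∈ F) → q ∈ F :=
    fun a hF h => hF.mem_of_mapClusterPt hq ((Filter.eventually_ge_atTop a).mono h)
  have hqs : ∀ a, q ∈ (s a).carrier := fun a =>
    hmem a (s a).isClosed fun b hab => hs hab (s b).point_mem
  obtain ⟨n, hn⟩ := mem_iUnion.1 (hcov.ge (mem_univ q))
  have hqA : q ∈ closure (⋃ a, (s a).approx n) := hmem (Classical.arbitrary Ω) isClosed_closure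
    fun b _ => closure_mono (subset_iUnion (fun a => (s a).approx n) b) ((s b).point_mem_closure n)
  obtain ⟨B, hBA, hB, hqB⟩ := exists_countable_mem_closure_of_tightness_le (hC n)
    (iUnion_subset fun a => (s a).approx_subset n) hn hqA
  choose! i hi using fun y (hy : y ∈ B) => mem_iUnion.1 (hBA hy)
  obtain ⟨a, ha⟩ := exists_forall_lt_of_countable hΩ (hB.image i)
  refine disjoint_left.1 (hfree a) (hqs a) (closure_mono (fun y hy => ?_) hqB)
  exact mem_iUnion₂.2 ⟨⟨i y, ha _ (mem_image_of_mem i hy)⟩, n, hi y hy⟩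

variable [CompactSpace X] [T2Space X]

theorem exists_freeSequenceStage (hcov : ⋃ n, C n = Set.univ) (hC : ∀ n, tightness (C n) ≤ ℵ₀)
    (hd : ∀ n, Dense (C n)) {H : Set X} (hH : IsClosed H) (hHδ : IsGδ H) (hne : H.Nonempty) :
    ∃ s : FreeSequenceStage C, s.carrier = H := by
  have := isCompact_iff_compactSpace.1 hH.isCompact
  have := hne.to_subtype
  obtain ⟨x, hx⟩ := exists_piCharPt_le_aleph0 (X := H) (C := fun n => Subtype.val ⁻¹' C n)
    (by rw [← preimage_iUnion, hcov, preimage_univ])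
    fun n => (tightness_le_of_isEmbedding (IsEmbedding.subtypeVal.restrictPreimage (C n))).trans
      (hC n)
  choose c hcC hc hxc using fun n => exists_countable_mem_closure_of_piCharPt_le hH hHδ hx (hd n)
  exact ⟨⟨H, x, c, hH, hHδ, x.2, hcC, hc, hxc⟩, rfl⟩

theorem exists_freeSequenceStage_disjoint_closure (hcov : ⋃ n, C n = Set.univ)
    (hC : ∀ n, tightness (C n) ≤ ℵ₀) (hd : ∀ n, Dense (C n)) {H : Set X} (hH : IsClosed H)
    (hHδ : IsGδ H) {c : Set X} (hc : ¬ H ⊆ closure c) :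
    ∃ s : FreeSequenceStage C, s.carrier ⊆ H ∧ Disjoint s.carrier (closure c) := by
  obtain ⟨y, hyH, hyc⟩ := not_subset.1 hc
  obtain ⟨G, hG, hGδ, hyG, hGc⟩ := exists_isClosed_isGδ_subset_of_subset isClosed_singleton
    isClosed_closure.isOpen_compl (singleton_subset_iff.2 hyc)
  obtain ⟨s, hs⟩ := exists_freeSequenceStage hcov hC hd (hH.inter hG) (hHδ.inter hGδ)
    ⟨y, hyH, singleton_subset_iff.1 hyG⟩
  exact ⟨s, hs ▸ inter_subset_left, disjoint_left.2 fun z hz => hGc (hs ▸ hz : z ∈ H ∩ G).2⟩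

theorem exists_freeSequence (hcov : ⋃ n, C n = Set.univ) (hC : ∀ n, tightness (C n) ≤ ℵ₀)
    (hd : ∀ n, Dense (C n)) {H : Set X} (hH : IsClosed H) (hHδ : IsGδ H) (hne : H.Nonempty)
    (hsub : ∀ K ⊆ H, K.Nonempty → IsClosed K → IsGδ K → ¬ Subseparable K)
    {Ω : Type*} [LinearOrder Ω] [WellFoundedLT Ω] (hΩ : ∀ a : Ω, (Iio a).Countable) :
    ∃ s : Ω → FreeSequenceStage C, Antitone (fun a => (s a).carrier) ∧
      ∀ a, Disjoint (s a).carrier (closure (⋃ b : Iio a, ⋃ n, (s b).approx n)) := by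
  obtain ⟨s₀, -⟩ := exists_freeSequenceStage hcov hC hd hH hHδ hne
  have : Nonempty (FreeSequenceStage C) := ⟨s₀⟩
  obtain ⟨s, hs⟩ := exists_forall_rel_Iio (fun a (p : Iio a → FreeSequenceStage C) t =>
    t.carrier ⊆ H ∩ ⋂ b, (p b).carrier ∧
      Disjoint t.carrier (closure (⋃ b, ⋃ n, (p b).approx n))) fun a (f : Ω → _) hf => by
    have hanti : Antitone fun b : Iio a => (f b).carrier := antitone_iff_forall_lt.2 fun b c hbc =>
      (hf c c.2).1.trans (inter_subset_right.trans (iInter_subset_of_subset ⟨b, hbc⟩ Subset.rfl))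
    have : Countable (Iio a) := (hΩ a).to_subtype
    refine exists_freeSequenceStage_disjoint_closure hcov hC hd
      (hH.inter (isClosed_iInter fun b : Iio a => (f b).isClosed))
      (hHδ.inter (.iInter fun b : Iio a => (f b).isGδ)) fun h => ?_
    refine hsub _ inter_subset_left (inter_iInter_nonempty_of_antitone hH.isCompact hne hanti
      (fun b => (hf b b.2).1.trans inter_subset_left) (fun b => (f b).isClosed)
      fun b => ⟨_, (f b).point_mem⟩) (hH.inter (isClosed_iInter fun b : Iio a => (f b).isClosed))
      (hHδ.inter (.iInter fun b : Iio a => (f b).isGδ)) ⟨_, ?_, h⟩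
    exact countable_iUnion fun b => countable_iUnion fun n => (f b).countable_approx n
  exact ⟨s, antitone_iff_forall_lt.2 fun b a hba => (hs a).1.trans
    (inter_subset_right.trans (iInter_subset_of_subset ⟨b, hba⟩ Subset.rfl)), fun a => (hs a).2⟩

theorem exists_isGδ_subseparable_subset (hcov : ⋃ n, C n = Set.univ)
    (hC : ∀ n, tightness (C n) ≤ ℵ₀) (hd : ∀ n, Dense (C n)) {O : Set X} (hO : IsOpen O)
    (hne : O.Nonempty) : ∃ K ⊆ O, K.Nonempty ∧ IsGδ K ∧ Subseparable K := by
  by_contra! hK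
  obtain ⟨x, hx⟩ := hne
  obtain ⟨H, hH, hHδ, hxH, hHO⟩ := exists_isClosed_isGδ_subset_of_subset isClosed_singleton hO
    (singleton_subset_iff.2 hx)
  have := uncountable_toType_ord_aleph_one.{0}
  obtain ⟨s, hs, hfree⟩ := exists_freeSequence hcov hC hd hH hHδ ⟨x, singleton_subset_iff.1 hxH⟩
    (fun K hKH hne _ hKδ => hK K (hKH.trans hHO) hne hKδ)
    countable_Iio_toType_ord_aleph_one.{0}
  exact false_of_freeSequence hcov hC countable_Iio_toType_ord_aleph_one hs hfree

end Subseparable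

section Continuum

theorem countable_setOf_coe_finset_subset {ι : Type*} {A : Set ι} (hA : A.Countable) :
    {s : Finset ι | (s : Set ι) ⊆ A}.Countable :=
  ((countable_ofPred_finite_subset hA).preimage (f := fun s : Finset ι => (s : Set ι))
    Finset.coe_injective).mono fun s => And.intro s.finite_toSet

theorem mk_powerset_le_continuum {α : Type u} {c : Set α} (hc : c.Countable) : #(𝒫 c) ≤ 𝔠 := by
  rw [mk_powerset, ← two_power_aleph0]
  exact power_le_power_left two_ne_zero hc.le_aleph0

theorem mk_iUnion_le_continuum {α : Type u} {ι : Type*} {S : ι → Set α} (hι : #ι ≤ 𝔠)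
    (hS : ∀ i, #(S i) ≤ 𝔠) : #(⋃ i, S i) ≤ 𝔠 := by
  rw [← lift_le, lift_continuum]
  calc lift #(⋃ i, S i) ≤ sum fun i => #(S i) := mk_iUnion_le_sum_mk_lift
    _ ≤ sum fun _ : ι => 𝔠 := sum_le_sum _ _ hS
    _ = lift #ι * 𝔠 := by rw [sum_const, lift_continuum]
    _ ≤ 𝔠 := mul_le_of_le aleph0_le_continuum (lift_le_continuum.2 hι) le_rfl

theorem exists_mk_le_continuum_forall_countable_subset {α : Type u} {Φ : Set α → Set α}
    (hΦ : ∀ B : Set α, B.Countable → #(Φ B) ≤ 𝔠) :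
    ∃ A : Set α, #A ≤ 𝔠 ∧ ∀ B ⊆ A, B.Countable → Φ B ⊆ A := by
  let Ω : Type u := (ℵ_ 1).ord.ToType
  have hΩ : ∀ a : Ω, (Iio a).Countable := countable_Iio_toType_ord_aleph_one
  have : Uncountable Ω := uncountable_toType_ord_aleph_one
  obtain ⟨A, hA⟩ := exists_forall_rel_Iio (fun (a : Ω) (p : Iio a → Set α) t =>
    #t ≤ 𝔠 ∧ ∀ B ⊆ ⋃ b, p b, B.Countable → Φ B ⊆ t) fun a f hf => by
      have hU : #(⋃ b : Iio a, f b) ≤ 𝔠 :=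
        mk_iUnion_le_continuum ((hΩ a).le_aleph0.trans aleph0_le_continuum) fun b => (hf b b.2).1
      refine ⟨⋃ B : {B : Set α // B ⊆ ⋃ b : Iio a, f b ∧ #B ≤ ℵ₀}, Φ B,
        mk_iUnion_le_continuum ?_ fun B => hΦ B (le_aleph0_iff_set_countable.1 B.2.2),
        fun B hB hBc => subset_iUnion_of_subset ⟨B, hB, hBc.le_aleph0⟩ Subset.rfl⟩
      calc _ ≤ max #(⋃ b : Iio a, f b) ℵ₀ ^ ℵ₀ := mk_bounded_subset_le _ _
        _ ≤ 𝔠 ^ ℵ₀ := power_le_power_right (max_le hU aleph0_le_continuum)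
        _ = 𝔠 := continuum_power_aleph0
  refine ⟨⋃ a, A a, mk_iUnion_le_continuum (by simpa [Ω] using aleph_one_le_continuum)
    fun a => (hA a).1, fun B hB hBc => ?_⟩
  choose! i hi using fun y (hy : y ∈ B) => mem_iUnion.1 (hB hy)
  obtain ⟨a, ha⟩ := exists_forall_lt_of_countable hΩ (hBc.image i)
  exact subset_iUnion_of_subset a ((hA a).2 B
    (fun y hy => mem_iUnion.2 ⟨⟨i y, ha _ (mem_image_of_mem i hy)⟩, hi y hy⟩) hBc)

theorem exists_mk_le_continuum_closed {α : Type u} {c : α → Set α} (hc : ∀ x, #(c x) ≤ 𝔠)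
    {ι : Type*} [Countable ι] (p : Finset (α × ι) → α) {Y : Set α → Set α}
    (hY : ∀ B : Set α, B.Countable → #(Y B) ≤ 𝔠) :
    ∃ A : Set α, #A ≤ 𝔠 ∧ (∀ x ∈ A, c x ⊆ A) ∧
      (∀ t : Finset (α × ι), (t : Set (α × ι)) ⊆ A ×ˢ Set.univ → p t ∈ A) ∧
      ∀ B ⊆ A, B.Countable → Y B ⊆ A := by
  obtain ⟨A, hA, hAΦ⟩ := exists_mk_le_continuum_forall_countable_subset (Φ := fun B =>
    (⋃ x : B, c x) ∪ p '' {t | (t : Set (α × ι)) ⊆ B ×ˢ Set.univ} ∪ Y B) fun B hB => by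
      have hcB : #(⋃ x : B, c x) ≤ 𝔠 :=
        mk_iUnion_le_continuum (hB.le_aleph0.trans aleph0_le_continuum) fun x => hc x
      have hpB : #(p '' {t | (t : Set (α × ι)) ⊆ B ×ˢ Set.univ}) ≤ 𝔠 :=
        ((countable_setOf_coe_finset_subset (hB.prod countable_univ)).image p).le_aleph0.trans
          aleph0_le_continuum
      exact (mk_union_le _ _).trans (add_le_of_le aleph0_le_continuum
        ((mk_union_le _ _).trans (add_le_of_le aleph0_le_continuum hcB hpB)) (hY B hB))
  refine ⟨A, hA, fun x hx => ?_, fun t ht => ?_, fun B hBA hB =>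
    subset_union_right.trans (hAΦ B hBA hB)⟩
  · exact Subset.trans (fun y hy => Or.inl (Or.inl (mem_iUnion.2 ⟨⟨x, rfl⟩, hy⟩)))
      (hAΦ {x} (singleton_subset_iff.2 hx) (countable_singleton x))
  · exact hAΦ (Prod.fst '' (t : Set (α × ι))) (image_subset_iff.2 fun i hi => (ht hi).1)
      (t.countable_toSet.image _)
      (Or.inl (Or.inr (mem_image_of_mem p fun i hi => ⟨mem_image_of_mem _ hi, mem_univ _⟩)))

end Continuum

section PseudoCharacter

variable {X : Type u} [TopologicalSpace X] [T2Space X]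

theorem exists_mk_le_continuum_sInter_eq_singleton {K : Set X} (hK : IsGδ K)
    (hKs : Subseparable K) {d : X} (hd : d ∈ K) :
    ∃ P : Set (Set X), #P ≤ 𝔠 ∧ (∀ U ∈ P, IsOpen U) ∧ ⋂₀ P = {d} := by
  obtain ⟨𝒰, h𝒰o, h𝒰, rfl⟩ := hK
  obtain ⟨c, hc, hKc⟩ := hKs
  refine ⟨𝒰 ∪ (fun b => (closure b)ᶜ) '' {b ∈ 𝒫 c | d ∉ closure b}, ?_, ?_, ?_⟩
  · exact (mk_union_le _ _).trans (add_le_of_le aleph0_le_continuum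
      (h𝒰.le_aleph0.trans aleph0_le_continuum)
      (mk_image_le.trans ((mk_le_mk_of_subset (sep_subset _ _)).trans
        (mk_powerset_le_continuum hc))))
  · rintro _ (hU | ⟨b, -, rfl⟩)
    exacts [h𝒰o _ hU, isClosed_closure.isOpen_compl]
  · refine subset_antisymm (fun y hy => ?_) (singleton_subset_iff.2 ?_)
    · by_contra hyd
      obtain ⟨u, v, hu, hv, hyu, hdv, huv⟩ := t2_separation hyd
      have hyc : y ∈ closure (u ∩ c) :=
        hu.inter_closure ⟨hyu, hKc fun U hU => hy U (Or.inl hU)⟩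
      have hdc : d ∉ closure (u ∩ c) := fun h =>
        disjoint_left.1 (huv.closure_left hv) (closure_mono inter_subset_left h) hdv
      exact hy _ (Or.inr ⟨u ∩ c, ⟨inter_subset_right, hdc⟩, rfl⟩) hyc
    · rintro _ (hU | ⟨b, hb, rfl⟩)
      exacts [hd _ hU, hb.2]

theorem exists_mk_le_mem_closure_of_sInter_eq_singleton [CompactSpace X] {P : Set (Set X)}
    (hP : ∀ U ∈ P, IsOpen U) {d : X} (hPd : ⋂₀ P = {d}) {D : Set X} (hD : Dense D) :
    ∃ s ⊆ D, #s ≤ max ℵ₀ #P ∧ d ∈ closure s := by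
  have hdP : ∀ U ∈ P, d ∈ U := fun U hU => (hPd.ge rfl : d ∈ ⋂₀ P) U hU
  choose L hLd hLc hLU using fun U : P =>
    exists_mem_nhds_isClosed_subset ((hP U U.2).mem_nhds (hdP U U.2))
  have hs : ∀ t : Finset P, ∃ s ∈ D, ∀ U ∈ t, s ∈ L U := fun t => by
    obtain ⟨s, hs, hsD⟩ := mem_closure_iff_nhds.1 (hD d) (⋂ U ∈ t, L U)
      ((Filter.biInter_finset_mem t).2 fun U _ => hLd U)
    exact ⟨s, hsD, mem_iInter₂.1 hs⟩
  choose s hsD hsL using hs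
  refine ⟨range s, range_subset_iff.2 hsD, mk_range_le.trans ?_,
    mem_closure_iff.2 fun U hU hdU => ?_⟩
  · rcases finite_or_infinite P with _ | _
    · exact mk_le_aleph0.trans (le_max_left _ _)
    · exact (mk_finset_of_infinite P).trans_le (le_max_right _ _)
  · obtain ⟨t, ht⟩ := hU.isClosed_compl.isCompact.elim_finite_subfamily_closed L hLc <| by
      refine disjoint_iff_inter_eq_empty.1 (disjoint_left.2 fun y hyU hy => hyU ?_)
      have hyd : y ∈ ⋂₀ P := fun V hV => hLU ⟨V, hV⟩ (mem_iInter.1 hy _)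
      rw [hPd] at hyd
      exact mem_singleton_iff.1 hyd ▸ hdU
    refine ⟨s t, not_notMem.1 fun hst => ?_, mem_range_self t⟩
    exact (ht.subset ⟨hst, mem_iInter₂.2 (hsL t)⟩).elim

end PseudoCharacter

section PowerHomogeneous

theorem exists_countable_forall_finset_subset {ι : Type*} {J : Finset ι → Set ι}
    (hJ : ∀ s, (J s).Countable) :
    ∃ A : Set ι, A.Countable ∧ ∀ s : Finset ι, (s : Set ι) ⊆ A → J s ⊆ A := by
  let A : ℕ → Set ι := fun n => n.rec ∅ fun _ B => B ∪ ⋃ s ∈ {s : Finset ι | (s : Set ι) ⊆ B}, J s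
  have hmono : Monotone A := monotone_nat_of_le_succ fun n => subset_union_left
  have hA : ∀ n, (A n).Countable := fun n => by
    induction n with
    | zero => exact countable_empty
    | succ n ih => exact ih.union ((countable_setOf_coe_finset_subset ih).biUnion fun s _ => hJ s)
  refine ⟨⋃ n, A n, countable_iUnion hA, fun s hs => ?_⟩
  obtain ⟨n, hn⟩ := hmono.directed_le.exists_mem_subset_of_finset_subset_biUnion hs
  exact ((subset_biUnion_of_mem (u := J) hn).trans subset_union_right).trans
    (subset_iUnion A (n + 1))

variable {I : Type*} {X : I → Type*} [∀ i, TopologicalSpace (X i)]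

theorem exists_mem_countable_setOf_ne {S : Set (∀ i, X i)} (hS : IsGδ S) (hne : S.Nonempty)
    (e : ∀ i, X i) : ∃ y ∈ S, {i | y i ≠ e i}.Countable := by
  classical
  obtain ⟨x, hx⟩ := hne
  obtain ⟨V, hV, rfl⟩ := hS.eq_iInter_nat
  choose J u hu huV using fun n => isOpen_pi_iff.1 (hV n) x (mem_iInter.1 hx n)
  refine ⟨(⋃ n, (J n : Set I)).piecewise x e, mem_iInter.2 fun n => huV n fun i hi => ?_,
    (countable_iUnion fun n => (J n).countable_toSet).mono fun i hi => ?_⟩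
  · rw [piecewise_eq_of_mem _ _ _ (mem_iUnion_of_mem n hi)]
    exact (hu n i hi).2
  · exact by_contra fun h => hi (piecewise_eq_of_notMem _ _ _ h)

theorem exists_countable_setOf_ne_and_mem_inter {Q : Set (∀ i, X i)}
    (hQ : ∀ O, IsOpen O → O.Nonempty → ∃ K ⊆ O ∩ Q, K.Nonempty ∧ IsGδ K) (e : ∀ i, X i)
    {O : Set (∀ i, X i)} (hO : IsOpen O) :
    ∃ x, {i | x i ≠ e i}.Countable ∧ (O.Nonempty → x ∈ O ∩ Q) := by
  by_cases hne : O.Nonempty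
  · obtain ⟨K, hK, hKne, hKδ⟩ := hQ O hO hne
    obtain ⟨x, hxK, hx⟩ := exists_mem_countable_setOf_ne hKδ hKne e
    exact ⟨x, hx, fun _ => hK hxK⟩
  · exact ⟨e, by simp, fun h => absurd h hne⟩

theorem exists_countable_mem_closure_pi {e : ∀ i, X i} (he : ∀ i, piCharPt (e i) ≤ ℵ₀)
    {Q : Set (∀ i, X i)}
    (hQ : ∀ O, IsOpen O → O.Nonempty → ∃ K ⊆ O ∩ Q, K.Nonempty ∧ IsGδ K) :
    ∃ E ⊆ Q, E.Countable ∧ e ∈ closure E := by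
  classical
  choose ℬ hℬc hℬ hℬe using fun i => piCharPt_le_aleph0_iff.1 (he i)
  let O : Finset (Σ i, ℬ i) → Set (∀ i, X i) := fun s => {x | ∀ p ∈ s, x p.1 ∈ p.2.1}
  have hO : ∀ s, IsOpen (O s) := fun s => by
    simp only [O, ofPred_forall]
    exact isOpen_biInter_finset fun p _ => (hℬ p.1 p.2 p.2.2).1.preimage (continuous_apply _)
  choose x hxe hx using fun s => exists_countable_setOf_ne_and_mem_inter hQ e (hO s)
  -- `A` contains all indices `⟨i, B⟩` such that `x s` differs from `e` at `i` for some finite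
  -- `s ⊆ A`.
  obtain ⟨A, hA, hAx⟩ := exists_countable_forall_finset_subset
    (J := fun s => ⋃ i ∈ {i | x s i ≠ e i}, range (Sigma.mk i)) fun s =>
      (hxe s).biUnion fun i _ => have := (hℬc i).to_subtype; countable_range _
  refine ⟨x '' {s | (s : Set _) ⊆ A ∧ (O s).Nonempty}, image_subset_iff.2 fun s hs => (hx s hs.2).2,
    ((countable_setOf_coe_finset_subset hA).mono fun s hs => hs.1).image x,
    mem_closure_iff.2 fun U hU heU => ?_⟩
  obtain ⟨G, N, hN, hNU⟩ := isOpen_pi_iff.1 hU e heU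
  have hB : ∀ i, ∃ B : ℬ i, i ∈ G → (B : Set (X i)) ⊆ N i := fun i => by
    by_cases hi : i ∈ G
    · obtain ⟨B, hB, hBN⟩ := hℬe i _ (hN i hi).1 (hN i hi).2
      exact ⟨⟨B, hB⟩, fun _ => hBN⟩
    · obtain ⟨B, hB, -⟩ := hℬe i _ isOpen_univ (mem_univ _)
      exact ⟨⟨B, hB⟩, fun h => absurd h hi⟩
  choose B hBN using hB
  let s : Finset (Σ i, ℬ i) := (G.image fun i => ⟨i, B i⟩).filter (· ∈ A)
  have hsA : (s : Set _) ⊆ A := fun p hp => (Finset.mem_filter.1 hp).2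
  have hsO : (O s).Nonempty := ⟨fun i => (hℬ i (B i) (B i).2).2.some, fun p hp => by
    obtain ⟨i, -, rfl⟩ := Finset.mem_image.1 (Finset.mem_filter.1 hp).1
    exact (hℬ i (B i) (B i).2).2.some_mem⟩
  refine ⟨x s, hNU fun i hi => ?_, mem_image_of_mem x ⟨hsA, hsO⟩⟩
  by_cases hxi : x s i = e i
  · exact hxi ▸ (hN i hi).2
  · have hiA : ⟨i, B i⟩ ∈ A := hAx s hsA (mem_biUnion hxi (mem_range_self _))
    exact hBN i hi ((hx s hsO).1 _
      (Finset.mem_filter.2 ⟨Finset.mem_image.2 ⟨i, hi, rfl⟩, hiA⟩))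

theorem PowerHomogeneous.exists_countable_mem_closure {X : Type u} [TopologicalSpace X]
    (hX : PowerHomogeneous X) {e : X} (he : piCharPt e ≤ ℵ₀) {P : Set X}
    (hP : ∀ O, IsOpen O → O.Nonempty → ∃ K ⊆ O ∩ P, K.Nonempty ∧ IsGδ K) (y : X) :
    ∃ E ⊆ P, E.Countable ∧ y ∈ closure E := by
  obtain ⟨I, ⟨i₀⟩, hI⟩ := hX
  obtain ⟨h, hh⟩ := hI (fun _ => e) fun _ => y
  let φ : (I → X) → X := fun x => h x i₀
  have hφ : Continuous φ := (continuous_apply i₀).comp h.continuous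
  have hφo : IsOpenMap φ := (isOpenMap_eval i₀).comp h.isOpenMap
  obtain ⟨E, hEP, hE, heE⟩ := exists_countable_mem_closure_pi (fun _ => he) (Q := φ ⁻¹' P)
    fun O hO hne => by
      obtain ⟨K, hK, ⟨z, hz⟩, hKδ⟩ := hP _ (hφo O hO) (hne.image φ)
      obtain ⟨x, hxO, rfl⟩ := (hK hz).1
      exact ⟨O ∩ φ ⁻¹' K, inter_subset_inter_right _ fun x hx => (hK hx).2, ⟨x, hxO, hz⟩,
        hO.isGδ.inter (hKδ.preimage hφ)⟩
  exact ⟨φ '' E, image_subset_iff.2 hEP, hE.image φ,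
    congrFun hh i₀ ▸ image_closure_subset_closure_image hφ (mem_image_of_mem φ heE)⟩

end PowerHomogeneous

section ClosingOff

variable {X : Type u} [TopologicalSpace X]

theorem exists_mk_le_continuum_closure_subset_biUnion [RegularSpace X] {W : X → Set X}
    (hW : ∀ x, IsGδ (W x)) (hxW : ∀ x, x ∈ W x) {c : Set X} (hc : c.Countable) :
    ∃ Y : Set X, #Y ≤ 𝔠 ∧ closure c ⊆ ⋃ x ∈ Y, W x := by
  choose w hwo hw using fun x => (hW x).eq_iInter_nat
  have hb : ∀ x n, ∃ b : 𝒫 c, x ∉ closure (b : Set X) ∧ closure c \ closure b ⊆ w x n := by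
    intro x n
    obtain ⟨L, hLx, hL, hLw⟩ := exists_mem_nhds_isClosed_subset
      ((hwo x n).mem_nhds (mem_iInter.1 (hw x ▸ hxW x) n))
    refine ⟨⟨c \ L, sdiff_subset⟩, fun hx => ?_, fun z ⟨hz, hzb⟩ => hLw ?_⟩
    · obtain ⟨z, hzL, -, hz⟩ := mem_closure_iff_nhds.1 hx L hLx
      exact hz hzL
    · rw [← inter_union_sdiff c L, closure_union] at hz
      exact closure_minimal inter_subset_right hL (hz.resolve_right hzb)
  choose b hb hbw using hb
  -- `W x` covers every point of `closure c` with the same code `b` as `x`, and there are only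
  -- `𝔠 ^ ℵ₀ = 𝔠` codes.
  obtain ⟨Y, -, hY⟩ := exists_subset_bijOn (closure c) b
  refine ⟨Y, ?_, fun z hz => ?_⟩
  · calc #Y ≤ #(ℕ → 𝒫 c) := mk_le_of_injective (injOn_iff_injective.1 hY.injOn)
      _ = #(𝒫 c) ^ ℵ₀ := by simp
      _ ≤ 𝔠 ^ ℵ₀ := power_le_power_right (mk_powerset_le_continuum hc)
      _ = 𝔠 := continuum_power_aleph0
  · obtain ⟨x, hxY, hxz⟩ := hY.surjOn (mem_image_of_mem b hz)
    refine mem_biUnion hxY (hw x ▸ mem_iInter.2 fun n => hbw x n ⟨hz, ?_⟩)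
    exact hxz ▸ hb z n

theorem exists_finset_subset_biUnion_notMem {K : Set X} (hK : IsCompact K) {ι : Type*}
    {w : ι → ℕ → Set X} (hw : ∀ i n, IsOpen (w i n)) {A : Set ι} (hKA : K ⊆ ⋃ i ∈ A, ⋂ n, w i n)
    {p : X} (hp : p ∉ ⋃ i ∈ A, ⋂ n, w i n) :
    ∃ t : Finset (ι × ℕ), (t : Set (ι × ℕ)) ⊆ A ×ˢ Set.univ ∧ K ⊆ ⋃ i ∈ t, w i.1 i.2 ∧
      p ∉ ⋃ i ∈ t, w i.1 i.2 := by
  simp only [mem_iUnion, mem_iInter, not_exists, not_forall] at hp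
  obtain ⟨b, hbA, hb, hKb⟩ := hK.elim_finite_subcover_image
    (b := {i : ι × ℕ | i.1 ∈ A ∧ p ∉ w i.1 i.2}) (c := fun i => w i.1 i.2)
    (fun i _ => hw i.1 i.2) fun q hq => by
      obtain ⟨i, hi, hqi⟩ := mem_iUnion₂.1 (hKA hq)
      obtain ⟨n, hn⟩ := hp i hi
      exact mem_biUnion (show (i, n) ∈ {i : ι × ℕ | i.1 ∈ A ∧ p ∉ w i.1 i.2} from ⟨hi, hn⟩)
        (mem_iInter.1 hqi n)
  lift b to Finset (ι × ℕ) using hb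
  refine ⟨b, fun i hi => ⟨(hbA hi).1, mem_univ _⟩, hKb, fun h => ?_⟩
  obtain ⟨i, hi, hpi⟩ := mem_iUnion₂.1 h
  exact (hbA hi).2 hpi

variable {C : ℕ → Set X}

theorem exists_countable_mem_closure_of_subset_closure_inter (hcov : ⋃ n, C n = Set.univ)
    (hC : ∀ n, tightness (C n) ≤ ℵ₀) {A : Set X} (hA : ∀ n, A ⊆ closure (A ∩ C n)) {q : X}
    (hq : q ∈ closure A) : ∃ B ⊆ A, B.Countable ∧ q ∈ closure B := by
  obtain ⟨n, hn⟩ := mem_iUnion.1 (hcov.ge (mem_univ q))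
  obtain ⟨B, hB, hBc, hqB⟩ := exists_countable_mem_closure_of_tightness_le (hC n)
    inter_subset_right hn (closure_minimal (hA n) isClosed_closure hq)
  exact ⟨B, hB.trans inter_subset_left, hBc, hqB⟩

theorem exists_mk_le_continuum_biUnion_eq_univ [CompactSpace X] [RegularSpace X]
    (hcov : ⋃ n, C n = Set.univ) (hC : ∀ n, tightness (C n) ≤ ℵ₀)
    (hCx : ∀ n x, ∃ c ⊆ C n, #c ≤ 𝔠 ∧ x ∈ closure c) {W : X → Set X} (hW : ∀ x, IsGδ (W x))
    (hxW : ∀ x, x ∈ W x) : ∃ A : Set X, #A ≤ 𝔠 ∧ ⋃ x ∈ A, W x = Set.univ := by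
  rcases isEmpty_or_nonempty X with _ | _
  · exact ⟨∅, by simp, Subsingleton.elim _ _⟩
  choose w hwo hw using fun x => (hW x).eq_iInter_nat
  choose c hcC hc hxc using hCx
  choose! Y hY hYW using fun (B : Set X) (hB : B.Countable) =>
    exists_mk_le_continuum_closure_subset_biUnion hW hxW hB
  choose! p hp using fun (t : Finset (X × ℕ)) (ht : ⋃ i ∈ t, w i.1 i.2 ≠ Set.univ) =>
    (ne_univ_iff_exists_notMem _).1 ht
  obtain ⟨A, hA, hAc, hAp, hAY⟩ := exists_mk_le_continuum_closed (c := fun x => ⋃ n, c n x)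
    (fun x => mk_iUnion_le_continuum (mk_le_aleph0.trans aleph0_le_continuum) fun n => hc n x) p hY
  have hAC : ∀ n, A ⊆ closure (A ∩ C n) := fun n x hx => by
    have hcA : c n x ⊆ A := (subset_iUnion (fun n => c n x) n).trans (hAc x hx)
    exact closure_mono (subset_inter hcA (hcC n x)) (hxc n x)
  have hAW : closure A ⊆ ⋃ x ∈ A, W x := fun q hq => by
    obtain ⟨B, hBA, hB, hqB⟩ := exists_countable_mem_closure_of_subset_closure_inter hcov hC hAC hq
    exact biUnion_subset_biUnion_left (hAY B hBA hB) (hYW B hB hqB)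
  refine ⟨A, hA, eq_univ_of_forall fun z => by_contra fun hz => ?_⟩
  simp only [hw] at hAW hz
  obtain ⟨t, htA, hAt, hzt⟩ := exists_finset_subset_biUnion_notMem isClosed_closure.isCompact hwo
    hAW hz
  exact hp t (fun h => hzt (h ▸ mem_univ z)) (hAt (subset_closure (hAp t htA)))

end ClosingOff

theorem exists_mk_le_continuum_mem_closure {X : Type u} [TopologicalSpace X] [CompactSpace X]
    [T2Space X] (hX : PowerHomogeneous X) {C : ℕ → Set X} (hcov : ⋃ n, C n = Set.univ)
    (hC : ∀ n, tightness (C n) ≤ ℵ₀) (hd : ∀ n, Dense (C n)) {D : Set X} (hD : Dense D) (x : X) :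
    ∃ c ⊆ D, #c ≤ 𝔠 ∧ x ∈ closure c := by
  have : Nonempty X := ⟨x⟩
  obtain ⟨e, he⟩ := exists_piCharPt_le_aleph0 hcov hC
  obtain ⟨E, hE, hEc, hxE⟩ := hX.exists_countable_mem_closure he
    (P := {d | ∃ c ⊆ D, #c ≤ 𝔠 ∧ d ∈ closure c}) (fun O hO hne => by
      obtain ⟨K, hKO, hK, hKδ, hKs⟩ := exists_isGδ_subseparable_subset hcov hC hd hO hne
      refine ⟨K, fun d hdK => ⟨hKO hdK, ?_⟩, hK, hKδ⟩
      obtain ⟨P, hP, hPo, hPd⟩ := exists_mk_le_continuum_sInter_eq_singleton hKδ hKs hdK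
      obtain ⟨c, hcD, hc, hdc⟩ := exists_mk_le_mem_closure_of_sInter_eq_singleton hPo hPd hD
      exact ⟨c, hcD, hc.trans (max_le aleph0_le_continuum hP), hdc⟩) x
  choose c hcD hc hec using fun e : E => hE e.2
  refine ⟨⋃ e, c e, iUnion_subset hcD,
    mk_iUnion_le_continuum (hEc.le_aleph0.trans aleph0_le_continuum) hc, ?_⟩
  exact closure_minimal (fun e he => closure_mono (subset_iUnion c ⟨e, he⟩) (hec ⟨e, he⟩))
    isClosed_closure hxE

theorem isTopologicalBasis_setOf_isGδ (X : Type*) [TopologicalSpace X] :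
    @IsTopologicalBasis X (generateFrom {G : Set X | IsGδ G}) {G | IsGδ G} :=
  @isTopologicalBasis_of_subbasis_of_finiteInter X (generateFrom {G | IsGδ G}) _ rfl
    ⟨IsGδ.univ, fun _ hs _ ht => hs.inter ht⟩

theorem lindelofNumber_le_of_isTopologicalBasis {X : Type u} [TopologicalSpace X]
    {b : Set (Set X)} (hb : IsTopologicalBasis b) {κ : Cardinal.{u}} (hκ : ℵ₀ ≤ κ)
    (h : ∀ W : X → Set X, (∀ x, W x ∈ b) → (∀ x, x ∈ W x) →
      ∃ A : Set X, #A ≤ κ ∧ ⋃ x ∈ A, W x = Set.univ) : LindelofNumber X ≤ κ := by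
  refine csInf_le' ⟨hκ, fun 𝒰 h𝒰 hcov => ?_⟩
  choose U hU hxU using fun x => mem_sUnion.1 (hcov.ge (mem_univ x))
  choose W hWb hxW hWU using fun x => hb.exists_subset_of_mem_open (hxU x) (h𝒰 _ (hU x))
  obtain ⟨A, hA, hAW⟩ := h W hWb hxW
  refine ⟨U '' A, image_subset_iff.2 fun x _ => hU x, mk_image_le.trans hA, ?_⟩
  rw [sUnion_image]
  exact univ_subset_iff.1 (hAW.ge.trans (biUnion_mono Subset.rfl fun x _ => hWU x))

/-- Theorem 4.7: `L(X_δ) ≤ 𝔠` for power homogeneous compacta that are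
countable unions of countably tight dense subspaces. -/
theorem stmt18 {X : Type u} [TopologicalSpace X] [CompactSpace X] [T2Space X]
    (hph : PowerHomogeneous X) (C : ℕ → Set X) (hcov : ⋃ n, C n = Set.univ)
    (hct : ∀ n, tightness ↥(C n) ≤ ℵ₀) (hd : ∀ n, Dense (C n)) :
    @LindelofNumber X (generateFrom
      {G : Set X | ∃ 𝒰 : Set (Set X), 𝒰.Countable ∧ (∀ U ∈ 𝒰, IsOpen U) ∧ G = ⋂₀ 𝒰}) ≤
      Cardinal.continuum := by
  have hGδ : {G : Set X | ∃ 𝒰 : Set (Set X), 𝒰.Countable ∧ (∀ U ∈ 𝒰, IsOpen U) ∧ G = ⋂₀ 𝒰} =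
      {G | IsGδ G} := ext fun G => exists_congr fun 𝒰 => and_left_comm
  rw [hGδ]
  have hCx : ∀ n x, ∃ c ⊆ C n, #c ≤ 𝔠 ∧ x ∈ closure c := fun n =>
    exists_mk_le_continuum_mem_closure hph hcov hct hd (hd n)
  exact @lindelofNumber_le_of_isTopologicalBasis X (_) _ (isTopologicalBasis_setOf_isGδ X) _
    aleph0_le_continuum fun W hW hxW =>
      exists_mk_le_continuum_biUnion_eq_univ hcov hct hCx hW hxW
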